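/- Let S be a real symmetric d×d matrix of full rank with exactly m positive eigenvalues, Y a d-dimensional Gaussian random variable with mean zero and positive definite covariance matrix Σ, and P the unique idempotent d×d matrix with PΣ, SP symmetric, PΣ ≥ 0, (I−P)Σ ≥ 0, SP ≥ 0, S(I−P) ≤ 0. Then X := PY and Z := (I−P)Y are the unique pair of independent d-dimensional Gaussian random variables with mean zero such that Y = X + Z, S(X,X) ≥ 0 a.s., S(Z,Z) ≤ 0 a.s., and S(X,Z) = 0 a.s. Moreover, the law of (X,Y) is the unique optimal plan for the primal problem with ν := law(Y), and range(P) := {Px : x ∈ ℝ^d} is the unique optimal set for the dual problem. -/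

import Mathlib

/-!
Write `Q = 1 - P`. The symmetry of `S P` gives the `S`-orthogonal splitting
`S(x, x) = S(Px, Px) + S(Qx, Qx)`, where the first term is nonnegative and vanishes only if
`Px = 0`, and the second is nonpositive and vanishes only if `Qx = 0` (`IsDecomp.P_eq_zero`,
`IsDecomp.Q_eq_zero`). The symmetry of `P Σ` gives `P Σ Qᵀ = 0`, so `PY` and `QY` are uncorrelated
jointly Gaussian vectors, hence independent (`IsDecomp.indepFun`).

*Primal problem.* A martingale plan satisfies `∫ M(x, y) dγ = ∫ M(x, x) dγ` for every matrix `M`.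
Consequently its value equals `½ ∫ S(Py, Py) dν` minus half of the integral of
`S(P(y - x), P(y - x)) - S(Qx, Qx) ≥ 0` (`IsDecomp.primalVal_eq`), and this integrand vanishes only
for `x = Py`. So the law of `(PY, Y)`, which is a martingale plan because `QY` is centred and
independent of `PY`, is the only optimal one.

*Dual problem.* The range of `P` is maximal `S`-monotone with Fitzpatrick function
`½ S(Py, Py)`. The reflection `R = P - Q` satisfies `R Σ Rᵀ = Σ`, hence preserves `ν`. For any
maximal `S`-monotone `H` the function `ψ_H` is convex and at least `½ S(y, y)`, so
`½ (ψ_H(y) + ψ_H(Ry)) ≥ ψ_H(Py) ≥ ½ S(Py, Py)`, and integration gives the lower bound. In the case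
of equality `ψ_H(Py) = ½ S(Py, Py)` for almost every `y`, which puts `Py` in `H`; since `H` is
closed and `ν` charges every open set, `H` contains the range of `P` (`IsDecomp.le_eInt`).

*Uniqueness of the decomposition.* Let `(X, Z)` be an admissible pair with covariances `A` and `C`.
The laws of `X` and `Z` are images of standard Gaussian laws and `X`, `Z` are independent, so the
almost sure relations extend to the ranges: `S ≥ 0` on the range of `A`, `S ≤ 0` on the range of
`C`, and `A S C = 0`. With `A + C = Σ` one finds that `K = A - A Σ⁻¹ A = A Σ⁻¹ C = C Σ⁻¹ A`
satisfies `Σ S K = 0`, so `K = 0`, and `P' = A Σ⁻¹` has all the properties required of `P`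
(`exists_isDecomp`), with `X = P'Y` almost surely. The primal problem has a unique solution, so
`(P'Y, Y)` and `(PY, Y)` have the same law, and this forces `P'Y = PY` almost surely.
-/

open MeasureTheory Filter Set Matrix

noncomputable section

/-- The bilinear form of the matrix `S`: `S(x,y) = ⟨x, Sy⟩`. -/
def Sb {d : ℕ} (S : Matrix (Fin d) (Fin d) ℝ) (x y : Fin d → ℝ) : ℝ :=
  x ⬝ᵥ S.mulVec y

/-- A set `G` is `S`-monotone if `S(x-y,x-y) ≥ 0` for all `x, y ∈ G`. -/
def SMono {d : ℕ} (S : Matrix (Fin d) (Fin d) ℝ) (G : Set (Fin d → ℝ)) : Prop :=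
  ∀ x ∈ G, ∀ y ∈ G, 0 ≤ Sb S (x - y) (x - y)

/-- Maximal `S`-monotone set. -/
def MaxSMono {d : ℕ} (S : Matrix (Fin d) (Fin d) ℝ) (G : Set (Fin d → ℝ)) : Prop :=
  SMono S G ∧ ∀ H, SMono S H → G ⊆ H → H = G

/-- The Fitzpatrick function `ψ_G(y) = sup_{x∈G} (S(x,y) - S(x,x)/2)`, with values in
`ℝ ∪ {+∞}` (modeled in `EReal`). -/
def fitz {d : ℕ} (S : Matrix (Fin d) (Fin d) ℝ) (G : Set (Fin d → ℝ))
    (y : Fin d → ℝ) : EReal :=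
  ⨆ x ∈ G, ((Sb S x y - Sb S x x / 2 : ℝ) : EReal)

/-- Positive part of an extended real number, in `ℝ≥0∞`. -/
def epos (x : EReal) : ENNReal := if x = ⊤ then ⊤ else ENNReal.ofReal x.toReal

/-- Integral of an `EReal`-valued function: positive part minus negative part. -/
def eInt {α : Type*} [MeasurableSpace α] (μ : Measure α) (f : α → EReal) : EReal :=
  ((∫⁻ a, epos (f a) ∂μ : ENNReal) : EReal) - ((∫⁻ a, epos (-(f a)) ∂μ : ENNReal) : EReal)

/-- The martingale property of a measure `γ(dx,dy)` on `ℝ^d × ℝ^d`: the conditional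
expectation of `y` given `x` equals `x`, `γ`-a.s. -/
def MartProp {d : ℕ} (γ : Measure ((Fin d → ℝ) × (Fin d → ℝ))) : Prop :=
  γ[(fun p => p.2) | MeasurableSpace.comap Prod.fst inferInstance] =ᵐ[γ] fun p => p.1

/-- `γ ∈ Γ(ν)`: probability measures on `ℝ^d × ℝ^d` with finite second moment,
`y`-marginal `ν` and the martingale property. -/
def MGamma {d : ℕ} (ν : Measure (Fin d → ℝ))
    (γ : Measure ((Fin d → ℝ) × (Fin d → ℝ))) : Prop :=
  IsProbabilityMeasure γ ∧ γ.map Prod.snd = ν ∧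
    Integrable (fun p => ‖p.1‖ ^ 2 + ‖p.2‖ ^ 2) γ ∧ MartProp γ

/-- Value of the primal problem: `(1/2) ∫ S(x,y) dγ`. -/
def primalVal {d : ℕ} (S : Matrix (Fin d) (Fin d) ℝ)
    (γ : Measure ((Fin d → ℝ) × (Fin d → ℝ))) : ℝ :=
  (1 / 2) * ∫ p, Sb S p.1 p.2 ∂γ

/-- `γ` is an optimal plan for the primal problem. -/
def PrimalOpt {d : ℕ} (S : Matrix (Fin d) (Fin d) ℝ) (ν : Measure (Fin d → ℝ))
    (γ : Measure ((Fin d → ℝ) × (Fin d → ℝ))) : Prop :=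
  MGamma ν γ ∧ ∀ γ', MGamma ν γ' → primalVal S γ' ≤ primalVal S γ

/-- `G` is an optimal set for the dual problem: minimize `∫ ψ_G dν` over maximal
`S`-monotone sets. -/
def DualOpt {d : ℕ} (S : Matrix (Fin d) (Fin d) ℝ) (ν : Measure (Fin d → ℝ))
    (G : Set (Fin d → ℝ)) : Prop :=
  MaxSMono S G ∧ ∀ H, MaxSMono S H → eInt ν (fitz S G) ≤ eInt ν (fitz S H)

/-- The support of a measure: points all of whose neighborhoods have positive measure. -/
def msupp {α : Type*} [TopologicalSpace α] [MeasurableSpace α] (μ : Measure α) : Set α :=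
  {x | ∀ U ∈ nhds x, μ U ≠ 0}

/-- The `S`-projection on `G`: minimizers over `G` of `z ↦ S(z-y,z-y)`. -/
def SProj {d : ℕ} (S : Matrix (Fin d) (Fin d) ℝ) (G : Set (Fin d → ℝ))
    (y : Fin d → ℝ) : Set (Fin d → ℝ) :=
  {x ∈ G | ∀ z ∈ G, Sb S (x - y) (x - y) ≤ Sb S (z - y) (z - y)}

/-- The inverse image of the projection: `P_G^{-1}(x) = {y : x ∈ P_G(y)}`. -/
def SProjInv {d : ℕ} (S : Matrix (Fin d) (Fin d) ℝ) (G : Set (Fin d → ℝ))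
    (x : Fin d → ℝ) : Set (Fin d → ℝ) :=
  {y | x ∈ SProj S G y}

/-- `Q_G(x) = ∪_{n ≥ 1} Q_G^{1/n}(x)`, where
`Q_G^ε(x) = {y ∈ P_G^{-1}(x) : x + ε (x - y) ∈ P_G^{-1}(x)}`. -/
def QG {d : ℕ} (S : Matrix (Fin d) (Fin d) ℝ) (G : Set (Fin d → ℝ))
    (x : Fin d → ℝ) : Set (Fin d → ℝ) :=
  ⋃ n : ℕ, {y ∈ SProjInv S G x |
    x + ((1 : ℝ) / (n + 1)) • (x - y) ∈ SProjInv S G x}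


/-- A random variable `W : Ω → ℝ^d` is centered Gaussian with covariance matrix `C` if
every linear functional `⟨a, W⟩` is a real Gaussian with mean `0` and variance
`⟨a, C a⟩`. -/
def IsCenteredGaussian {d : ℕ} {Ω : Type*} [MeasurableSpace Ω] (ℙ : Measure Ω)
    (W : Ω → (Fin d → ℝ)) (C : Matrix (Fin d) (Fin d) ℝ) : Prop :=
  ∀ a : Fin d → ℝ, ℙ.map (fun ω => a ⬝ᵥ W ω) =
    ProbabilityTheory.gaussianReal 0 (Real.toNNReal (a ⬝ᵥ C.mulVec a))

/-! ### Centred Gaussian vectors -/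

/-- The standard Gaussian law on `ℝ^d`, as a product of one-dimensional Gaussian laws. -/
def stdG (d : ℕ) : Measure (Fin d → ℝ) :=
  Measure.pi fun _ => ProbabilityTheory.gaussianReal 0 1

instance (d : ℕ) : IsProbabilityMeasure (stdG d) := by
  unfold stdG; infer_instance

instance (d : ℕ) : (stdG d).IsOpenPosMeasure := by
  have : (ProbabilityTheory.gaussianReal 0 1).IsOpenPosMeasure :=
    (ProbabilityTheory.gaussianReal_absolutelyContinuous' 0 one_ne_zero).isOpenPosMeasure
  unfold stdG; infer_instance

lemma strongDual_eq_dot {d : ℕ} (L : StrongDual ℝ (Fin d → ℝ)) :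
    ∃ a : Fin d → ℝ, ∀ x, L x = a ⬝ᵥ x := by
  refine ⟨fun i => L (Pi.single i 1), fun x => ?_⟩
  conv_lhs => rw [pi_eq_sum_univ' x]
  simp only [map_sum, map_smul, dotProduct, smul_eq_mul]
  refine Finset.sum_congr rfl fun i _ => ?_
  rw [mul_comm]

namespace IsCenteredGaussian

variable {d : ℕ} {Ω : Type*} [MeasurableSpace Ω] {ℙ : Measure Ω}
  {W : Ω → (Fin d → ℝ)} {C : Matrix (Fin d) (Fin d) ℝ}

/-- The law of a non-a.e.-measurable function is the junk value `0`, so a Gaussian vector in the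
sense of `IsCenteredGaussian` is automatically a.e. measurable. -/
lemma aemeasurable_dot (h : IsCenteredGaussian ℙ W C) (a : Fin d → ℝ) :
    AEMeasurable (fun ω => a ⬝ᵥ W ω) ℙ := by
  by_contra hc
  have := h a
  rw [Measure.map_of_not_aemeasurable hc] at this
  exact (IsProbabilityMeasure.ne_zero _) this.symm

lemma aemeasurable (h : IsCenteredGaussian ℙ W C) : AEMeasurable W ℙ := by
  refine aemeasurable_pi_lambda _ fun i => ?_
  simpa using h.aemeasurable_dot (Pi.single i 1)

lemma charFunDual_map (h : IsCenteredGaussian ℙ W C) (L : StrongDual ℝ (Fin d → ℝ))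
    (a : Fin d → ℝ) (ha : ∀ x, L x = a ⬝ᵥ x) :
    charFunDual (ℙ.map W) L =
      Complex.exp (-((Real.toNNReal (a ⬝ᵥ C.mulVec a) : ℝ) : ℂ) / 2) := by
  rw [charFunDual_eq_charFun_map_one, AEMeasurable.map_map_of_aemeasurable (by fun_prop)
    h.aemeasurable]
  have : (L ∘ W) = fun ω => a ⬝ᵥ W ω := by ext ω; simp [ha]
  rw [this, h a, ProbabilityTheory.charFun_gaussianReal]
  simp [neg_div]

/-- A centred Gaussian law is determined by its covariance matrix. -/
lemma map_eq {Ω' : Type*} [MeasurableSpace Ω'] {ℙ' : Measure Ω'} {W' : Ω' → (Fin d → ℝ)}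
    [IsFiniteMeasure ℙ] [IsFiniteMeasure ℙ']
    (h : IsCenteredGaussian ℙ W C) (h' : IsCenteredGaussian ℙ' W' C) :
    ℙ.map W = ℙ'.map W' := by
  refine Measure.ext_of_charFunDual (funext fun L => ?_)
  obtain ⟨a, ha⟩ := strongDual_eq_dot L
  rw [h.charFunDual_map L a ha, h'.charFunDual_map L a ha]

lemma mulVec (h : IsCenteredGaussian ℙ W C) (M : Matrix (Fin d) (Fin d) ℝ) :
    IsCenteredGaussian ℙ (fun ω => M.mulVec (W ω)) (M * C * Mᵀ) := by
  intro a
  have := h (Mᵀ.mulVec a)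
  simp only [← mulVec_mulVec, dotProduct_mulVec, vecMul_transpose] at this ⊢
  simpa [← vecMul_transpose, dotProduct_mulVec] using this

lemma stdG_id (d : ℕ) : IsCenteredGaussian (stdG d) (fun x => x) 1 := by
  intro a
  refine Measure.ext_of_charFun (funext fun t => ?_)
  rw [ProbabilityTheory.charFun_gaussianReal, charFun_apply, integral_map (by fun_prop)
    (by fun_prop)]
  have : ∀ x : Fin d → ℝ, Complex.exp (↑(inner ℝ (a ⬝ᵥ x) t) * Complex.I)
      = ∏ i, Complex.exp (↑(inner ℝ (x i) (t * a i)) * Complex.I) := by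
    intro x
    rw [← Complex.exp_sum, ← Finset.sum_mul, ← Complex.ofReal_sum]
    congr 3
    simp only [dotProduct, RCLike.inner_apply, conj_trivial, Finset.mul_sum]
    exact Finset.sum_congr rfl fun i _ => by ring
  simp_rw [this]
  rw [stdG, integral_fintype_prod_eq_prod
    (f := fun i y => Complex.exp (↑(inner ℝ y (t * a i)) * Complex.I))]
  simp_rw [← charFun_apply, ProbabilityTheory.charFun_gaussianReal]
  rw [← Complex.exp_sum]
  congr 1
  have h0 : 0 ≤ a ⬝ᵥ a := by
    simp only [dotProduct]; exact Finset.sum_nonneg fun i _ => mul_self_nonneg _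
  simp only [one_mulVec, Real.coe_toNNReal _ h0]
  simp only [dotProduct]
  push_cast
  simp only [mul_zero, zero_mul, zero_sub, one_mul, Finset.sum_mul, Finset.sum_neg_distrib,
    Finset.sum_div]
  congr 1
  exact Finset.sum_congr rfl fun i _ => by ring

open scoped MatrixOrder Norms.L2Operator in
/-- A centred Gaussian law with positive semidefinite covariance `C` is the image of the standard
one under a square root of `C`. -/
lemma exists_factor [IsFiniteMeasure ℙ] (h : IsCenteredGaussian ℙ W C) (hC : C.PosSemidef) :
    ∃ B : Matrix (Fin d) (Fin d) ℝ, C = B * Bᵀ ∧ ℙ.map W = (stdG d).map B.mulVec := by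
  obtain ⟨B, hB⟩ := CStarAlgebra.nonneg_iff_eq_star_mul_self.mp hC.nonneg
  have hB' : C = Bᵀ * Bᵀᵀ := by
    simpa [star_eq_conjTranspose, conjTranspose_eq_transpose_of_trivial] using hB
  refine ⟨Bᵀ, hB', ?_⟩
  refine h.map_eq ?_
  have := (stdG_id d).mulVec Bᵀ
  rw [mul_one, ← hB'] at this
  exact this

lemma memLp_dot (h : IsCenteredGaussian ℙ W C) (a : Fin d → ℝ) :
    MemLp (fun ω => a ⬝ᵥ W ω) 2 ℙ := by
  have := ProbabilityTheory.memLp_id_gaussianReal (μ := 0)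
    (v := Real.toNNReal (a ⬝ᵥ C.mulVec a)) 2
  rw [← h a] at this
  exact (memLp_map_measure_iff aestronglyMeasurable_id (h.aemeasurable_dot a)).1
    (by simpa using this)

lemma memLp_apply (h : IsCenteredGaussian ℙ W C) (i : Fin d) :
    MemLp (fun ω => W ω i) 2 ℙ := by
  simpa using h.memLp_dot (Pi.single i 1)

lemma integral_dot (h : IsCenteredGaussian ℙ W C) (a : Fin d → ℝ) :
    ∫ ω, a ⬝ᵥ W ω ∂ℙ = 0 := by
  have : ∫ x, x ∂(ℙ.map fun ω => a ⬝ᵥ W ω) = 0 := by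
    rw [h a, ProbabilityTheory.integral_id_gaussianReal]
  rwa [integral_map (h.aemeasurable_dot a) (by fun_prop)] at this

lemma integral_apply (h : IsCenteredGaussian ℙ W C) (i : Fin d) :
    ∫ ω, W ω i ∂ℙ = 0 := by
  simpa using h.integral_dot (Pi.single i 1)

lemma integral_dot_sq (h : IsCenteredGaussian ℙ W C) (a : Fin d → ℝ) :
    ∫ ω, (a ⬝ᵥ W ω) ^ 2 ∂ℙ = Real.toNNReal (a ⬝ᵥ C.mulVec a) := by
  have : ∫ x, x ^ 2 ∂(ℙ.map fun ω => a ⬝ᵥ W ω) = Real.toNNReal (a ⬝ᵥ C.mulVec a) := by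
    have h1 := ProbabilityTheory.variance_id_gaussianReal (μ := 0)
      (v := Real.toNNReal (a ⬝ᵥ C.mulVec a))
    rw [ProbabilityTheory.variance_eq_integral (by fun_prop)] at h1
    rw [h a]
    simpa using h1
  rwa [integral_map (h.aemeasurable_dot a) (by fun_prop)] at this

end IsCenteredGaussian

/-- The matrix of second moments `E[Wᵢ Wⱼ]`. -/
def momMat {d : ℕ} {Ω : Type*} [MeasurableSpace Ω] (ℙ : Measure Ω) (W : Ω → (Fin d → ℝ)) :
    Matrix (Fin d) (Fin d) ℝ := Matrix.of fun i j => ∫ ω, W ω i * W ω j ∂ℙ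

section momMat

variable {d : ℕ} {Ω : Type*} [MeasurableSpace Ω] {ℙ : Measure Ω}
  {W : Ω → (Fin d → ℝ)} {C : Matrix (Fin d) (Fin d) ℝ}

lemma momMat_isHermitian : (momMat ℙ W).IsHermitian := by
  ext i j; simp [momMat, mul_comm]

lemma dot_momMat (hW : ∀ i, MemLp (fun ω => W ω i) 2 ℙ) (a : Fin d → ℝ) :
    a ⬝ᵥ (momMat ℙ W).mulVec a = ∫ ω, (a ⬝ᵥ W ω) ^ 2 ∂ℙ := by
  have h1 : ∀ ω, (a ⬝ᵥ W ω) ^ 2 = ∑ i, ∑ j, a i * a j * (W ω i * W ω j) := by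
    intro ω
    rw [sq, dotProduct, Finset.sum_mul_sum]
    exact Finset.sum_congr rfl fun i _ => Finset.sum_congr rfl fun j _ => by ring
  have hi : ∀ i j, Integrable (fun ω => a i * a j * (W ω i * W ω j)) ℙ := fun i j =>
    ((hW i).integrable_mul (hW j)).const_mul _
  simp_rw [h1]
  rw [integral_finsetSum _ fun i _ => integrable_finsetSum _ fun j _ => hi i j]
  simp_rw [integral_finsetSum _ fun j _ => hi _ j, integral_const_mul]
  simp only [dotProduct, Matrix.mulVec, momMat, of_apply, Finset.mul_sum]
  exact Finset.sum_congr rfl fun i _ => Finset.sum_congr rfl fun j _ => by ring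

lemma momMat_posSemidef (hW : ∀ i, MemLp (fun ω => W ω i) 2 ℙ) : (momMat ℙ W).PosSemidef := by
  refine .of_dotProduct_mulVec_nonneg momMat_isHermitian fun x => ?_
  rw [star_trivial, dot_momMat hW]
  positivity

/-- The matrix in `IsCenteredGaussian` enters only through the positive parts of its quadratic
form; it can always be replaced by the genuine covariance matrix. -/
lemma IsCenteredGaussian.momMat (h : IsCenteredGaussian ℙ W C) :
    IsCenteredGaussian ℙ W (momMat ℙ W) := by
  intro a
  rw [dot_momMat h.memLp_apply, h.integral_dot_sq, h a, Real.toNNReal_coe]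

lemma eq_of_dot_mulVec_eq {A B : Matrix (Fin d) (Fin d) ℝ} (hA : A.IsHermitian)
    (hB : B.IsHermitian) (h : ∀ a, a ⬝ᵥ A.mulVec a = a ⬝ᵥ B.mulVec a) : A = B := by
  have e : ∀ (M : Matrix (Fin d) (Fin d) ℝ) (x y : Fin d → ℝ), M.IsHermitian →
      (x + y) ⬝ᵥ M.mulVec (x + y) = x ⬝ᵥ M.mulVec x + y ⬝ᵥ M.mulVec y + 2 * (x ⬝ᵥ M.mulVec y) := by
    intro M x y hM
    have : y ⬝ᵥ M.mulVec x = x ⬝ᵥ M.mulVec y := by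
      rw [dotProduct_comm, ← vecMul_transpose, ← dotProduct_mulVec]
      have hM' : Mᵀ = M := by simpa [conjTranspose_eq_transpose_of_trivial] using hM.eq
      rw [hM']
    simp only [mulVec_add, dotProduct_add, add_dotProduct, this]
    ring
  ext i j
  have h1 := h (Pi.single i 1 + Pi.single j 1)
  rw [e A _ _ hA, e B _ _ hB, h, h] at h1
  have : Pi.single i 1 ⬝ᵥ A.mulVec (Pi.single j 1) = Pi.single i 1 ⬝ᵥ B.mulVec (Pi.single j 1) := by
    linarith
  simpa using this

lemma IsCenteredGaussian.momMat_eq (h : IsCenteredGaussian ℙ W C) (hC : C.PosSemidef) :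
    _root_.momMat ℙ W = C := by
  refine eq_of_dot_mulVec_eq momMat_isHermitian hC.1 fun a => ?_
  rw [dot_momMat h.memLp_apply, h.integral_dot_sq, Real.coe_toNNReal]
  simpa using hC.dotProduct_mulVec_nonneg a

end momMat

/-! ### The bilinear form and its splitting along `P` -/

section Sb

variable {d : ℕ} (S : Matrix (Fin d) (Fin d) ℝ) (x y z : Fin d → ℝ)

lemma Sb_add_left : Sb S (x + y) z = Sb S x z + Sb S y z := by simp [Sb, add_dotProduct]
lemma Sb_add_right : Sb S x (y + z) = Sb S x y + Sb S x z := by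
  simp [Sb, mulVec_add, dotProduct_add]
lemma Sb_sub_left : Sb S (x - y) z = Sb S x z - Sb S y z := by simp [Sb, sub_dotProduct]
lemma Sb_sub_right : Sb S x (y - z) = Sb S x y - Sb S x z := by
  simp [Sb, mulVec_sub, dotProduct_sub]

variable {S} in
lemma Sb_comm (hS : S.IsHermitian) : Sb S x y = Sb S y x := by
  have hS' : Sᵀ = S := by simpa [conjTranspose_eq_transpose_of_trivial] using hS.eq
  rw [Sb, Sb, dotProduct_comm, ← vecMul_transpose, ← dotProduct_mulVec, hS']

@[fun_prop]
lemma continuous_Sb {α : Type*} [TopologicalSpace α] {f g : α → Fin d → ℝ} (hf : Continuous f)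
    (hg : Continuous g) : Continuous fun a => Sb S (f a) (g a) := by
  unfold Sb; fun_prop

lemma Sb_eq_sum : Sb S x y = ∑ i, ∑ j, S i j * (x i * y j) := by
  simp only [Sb, dotProduct, Matrix.mulVec, Finset.mul_sum]
  exact Finset.sum_congr rfl fun i _ => Finset.sum_congr rfl fun j _ => by ring

lemma Sb_mulVec_right (P : Matrix (Fin d) (Fin d) ℝ) :
    Sb S x (P.mulVec y) = Sb (S * P) x y := by
  simp [Sb, mulVec_mulVec]

lemma Sb_mulVec_left (P : Matrix (Fin d) (Fin d) ℝ) :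
    Sb S (P.mulVec x) y = Sb (Pᵀ * S) x y := by
  rw [Sb, Sb, ← mulVec_mulVec, dotProduct_mulVec x, vecMul_transpose]

lemma integrable_Sb {α : Type*} [MeasurableSpace α] {μ : Measure α} {f g : α → Fin d → ℝ}
    (hf : ∀ i, MemLp (fun a => f a i) 2 μ) (hg : ∀ i, MemLp (fun a => g a i) 2 μ) :
    Integrable (fun a => Sb S (f a) (g a)) μ := by
  simp_rw [Sb_eq_sum]
  exact integrable_finsetSum _ fun i _ => integrable_finsetSum _ fun j _ =>
    ((hf i).integrable_mul (hg j)).const_mul _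

end Sb

/-- The defining properties of the projection `P` attached to `S` and the covariance `Sig`. -/
structure IsDecomp {d : ℕ} (S Sig P : Matrix (Fin d) (Fin d) ℝ) : Prop where
  idem : P * P = P
  hermPSig : (P * Sig).IsHermitian
  hermSP : (S * P).IsHermitian
  psdPSig : (P * Sig).PosSemidef
  psdQSig : ((1 - P) * Sig).PosSemidef
  psdSP : (S * P).PosSemidef
  nsdSQ : (-(S * (1 - P))).PosSemidef

lemma Matrix.IsHermitian.transpose_eq {d : ℕ} {A : Matrix (Fin d) (Fin d) ℝ}
    (h : A.IsHermitian) : Aᵀ = A := by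
  simpa [conjTranspose_eq_transpose_of_trivial] using h.eq

namespace IsDecomp

variable {d : ℕ} {S Sig P : Matrix (Fin d) (Fin d) ℝ}

lemma mulVec_mulVec_self (h : IsDecomp S Sig P) (x : Fin d → ℝ) :
    P.mulVec (P.mulVec x) = P.mulVec x := by
  rw [mulVec_mulVec, h.idem]

lemma one_sub_mulVec (x : Fin d → ℝ) : (1 - P).mulVec x = x - P.mulVec x := by
  rw [sub_mulVec, one_mulVec]

lemma transpose_mul (h : IsDecomp S Sig P) (hS : S.IsHermitian) : Pᵀ * S = S * P := by
  rw [← h.hermSP.transpose_eq, Matrix.transpose_mul, hS.transpose_eq]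

lemma Sb_P_left (h : IsDecomp S Sig P) (hS : S.IsHermitian) (x y : Fin d → ℝ) :
    Sb S (P.mulVec x) y = Sb S x (P.mulVec y) := by
  rw [Sb_mulVec_left, Sb_mulVec_right, h.transpose_mul hS]

lemma Sb_P_P (h : IsDecomp S Sig P) (hS : S.IsHermitian) (x y : Fin d → ℝ) :
    Sb S (P.mulVec x) (P.mulVec y) = Sb (S * P) x y := by
  rw [h.Sb_P_left hS, h.mulVec_mulVec_self, Sb_mulVec_right]

/-- `range P` and `range (1 - P)` are `S`-orthogonal. -/
lemma Sb_P_Q (h : IsDecomp S Sig P) (hS : S.IsHermitian) (x y : Fin d → ℝ) :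
    Sb S (P.mulVec x) (y - P.mulVec y) = 0 := by
  rw [h.Sb_P_left hS, mulVec_sub, h.mulVec_mulVec_self, sub_self]
  simp [Sb]

lemma Sb_P_nonneg (h : IsDecomp S Sig P) (hS : S.IsHermitian) (x : Fin d → ℝ) :
    0 ≤ Sb S (P.mulVec x) (P.mulVec x) := by
  rw [h.Sb_P_P hS]
  simpa [Sb] using h.psdSP.dotProduct_mulVec_nonneg x

lemma eq_zero_of_mulVec (hdet : IsUnit S.det) {x : Fin d → ℝ} (hx : S.mulVec x = 0) : x = 0 := by
  have : S⁻¹.mulVec (S.mulVec x) = x := by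
    rw [mulVec_mulVec, nonsing_inv_mul _ hdet, one_mulVec]
  rw [← this, hx, mulVec_zero]

/-- `S` is positive definite on `range P`. -/
lemma P_eq_zero (h : IsDecomp S Sig P) (hS : S.IsHermitian) (hdet : IsUnit S.det) {x : Fin d → ℝ}
    (hx : Sb S (P.mulVec x) (P.mulVec x) = 0) : P.mulVec x = 0 := by
  rw [h.Sb_P_P hS] at hx
  have := (h.psdSP.dotProduct_mulVec_zero_iff x).1 (by simpa [Sb] using hx)
  rw [← mulVec_mulVec] at this
  exact eq_zero_of_mulVec hdet this

lemma Sb_Q_Q (h : IsDecomp S Sig P) (hS : S.IsHermitian) (x : Fin d → ℝ) :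
    Sb S (x - P.mulVec x) (x - P.mulVec x) = - Sb (-(S * (1 - P))) x x := by
  rw [Sb_sub_left, h.Sb_P_Q hS, sub_zero, ← one_sub_mulVec, Sb_mulVec_right]
  simp [Sb, neg_mulVec]

lemma Sb_Q_nonpos (h : IsDecomp S Sig P) (hS : S.IsHermitian) (x : Fin d → ℝ) :
    Sb S (x - P.mulVec x) (x - P.mulVec x) ≤ 0 := by
  rw [h.Sb_Q_Q hS, neg_nonpos]
  simpa [Sb] using h.nsdSQ.dotProduct_mulVec_nonneg x

/-- `S` is negative definite on `range (1 - P)`. -/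
lemma Q_eq_zero (h : IsDecomp S Sig P) (hS : S.IsHermitian) (hdet : IsUnit S.det) {x : Fin d → ℝ}
    (hx : Sb S (x - P.mulVec x) (x - P.mulVec x) = 0) : x = P.mulVec x := by
  rw [h.Sb_Q_Q hS, neg_eq_zero] at hx
  have := (h.nsdSQ.dotProduct_mulVec_zero_iff x).1 (by simpa [Sb] using hx)
  rw [neg_mulVec, neg_eq_zero, ← mulVec_mulVec] at this
  have := eq_zero_of_mulVec hdet this
  rwa [one_sub_mulVec, sub_eq_zero] at this

lemma Sb_self_eq (h : IsDecomp S Sig P) (hS : S.IsHermitian) (x : Fin d → ℝ) :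
    Sb S x x = Sb S (P.mulVec x) (P.mulVec x) + Sb S (x - P.mulVec x) (x - P.mulVec x) := by
  have h1 := h.Sb_P_Q hS x x
  have h2 := Sb_comm (P.mulVec x) x hS
  simp only [Sb_sub_left, Sb_sub_right] at *
  linarith

end IsDecomp

/-! ### Monotone sets and Fitzpatrick functions -/

section Fitz

variable {d : ℕ} {S : Matrix (Fin d) (Fin d) ℝ} {G : Set (Fin d → ℝ)}

lemma MaxSMono.mem_of_forall (hG : MaxSMono S G) {y : Fin d → ℝ}
    (hy : ∀ x ∈ G, 0 ≤ Sb S (x - y) (x - y)) : y ∈ G := by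
  have : SMono S (insert y G) := by
    rintro a (rfl | ha) b (rfl | hb)
    · simp [Sb]
    · have := hy b hb
      rw [← neg_sub, Sb, mulVec_neg, neg_dotProduct_neg]
      exact this
    · exact hy a ha
    · exact hG.1 a ha b hb
  rw [← hG.2 _ this (subset_insert _ _)]
  exact mem_insert _ _

lemma Sb_sub_self (hS : S.IsHermitian) (x y : Fin d → ℝ) :
    Sb S (x - y) (x - y) = Sb S y y - 2 * (Sb S x y - Sb S x x / 2) := by
  simp only [Sb_sub_left, Sb_sub_right, Sb_comm y x hS]
  ring

lemma MaxSMono.le_fitz (hS : S.IsHermitian) (hG : MaxSMono S G) (y : Fin d → ℝ) :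
    ((Sb S y y / 2 : ℝ) : EReal) ≤ fitz S G y := by
  by_contra! hlt
  have hy : y ∈ G := by
    refine hG.mem_of_forall fun x hx => ?_
    have h1 : ((Sb S x y - Sb S x x / 2 : ℝ) : EReal) ≤ fitz S G y :=
      le_iSup₂ (f := fun x (_ : x ∈ G) => ((Sb S x y - Sb S x x / 2 : ℝ) : EReal)) x hx
    have h2 := EReal.coe_lt_coe_iff.1 (h1.trans_lt hlt)
    rw [Sb_sub_self hS]
    linarith
  have h1 : ((Sb S y y - Sb S y y / 2 : ℝ) : EReal) ≤ fitz S G y :=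
    le_iSup₂ (f := fun x (_ : x ∈ G) => ((Sb S x y - Sb S x x / 2 : ℝ) : EReal)) y hy
  have h2 := EReal.coe_lt_coe_iff.1 (h1.trans_lt hlt)
  linarith

lemma MaxSMono.mem_of_fitz_le (hS : S.IsHermitian) (hG : MaxSMono S G) {y : Fin d → ℝ}
    (hy : fitz S G y ≤ ((Sb S y y / 2 : ℝ) : EReal)) : y ∈ G := by
  refine hG.mem_of_forall fun x hx => ?_
  have h1 : ((Sb S x y - Sb S x x / 2 : ℝ) : EReal) ≤ fitz S G y :=
    le_iSup₂ (f := fun x (_ : x ∈ G) => ((Sb S x y - Sb S x x / 2 : ℝ) : EReal)) x hx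
  have h2 := EReal.coe_le_coe_iff.1 (h1.trans hy)
  rw [Sb_sub_self hS]
  linarith

lemma MaxSMono.isClosed (hG : MaxSMono S G) : IsClosed G := by
  have : G = ⋂ x ∈ G, {y | 0 ≤ Sb S (x - y) (x - y)} := by
    ext y
    simp only [mem_iInter, mem_ofPred_eq]
    exact ⟨fun hy x hx => hG.1 x hx y hy, fun hy => hG.mem_of_forall hy⟩
  rw [this]
  refine isClosed_biInter fun x _ => isClosed_le continuous_const (by fun_prop)

/-- Midpoint convexity of the Fitzpatrick function. -/
lemma fitz_midpoint {u v w : Fin d → ℝ} {r s : ℝ} (hw : u + v = w + w) (hu : fitz S G u = r)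
    (hv : fitz S G v = s) : fitz S G w ≤ (((r + s) / 2 : ℝ) : EReal) := by
  refine iSup₂_le fun x hx => ?_
  have h1 : ((Sb S x u - Sb S x x / 2 : ℝ) : EReal) ≤ fitz S G u :=
    le_iSup₂ (f := fun x (_ : x ∈ G) => ((Sb S x u - Sb S x x / 2 : ℝ) : EReal)) x hx
  have h2 : ((Sb S x v - Sb S x x / 2 : ℝ) : EReal) ≤ fitz S G v :=
    le_iSup₂ (f := fun x (_ : x ∈ G) => ((Sb S x v - Sb S x x / 2 : ℝ) : EReal)) x hx
  rw [hu, EReal.coe_le_coe_iff] at h1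
  rw [hv, EReal.coe_le_coe_iff] at h2
  rw [EReal.coe_le_coe_iff]
  have h3 : Sb S x u + Sb S x v = Sb S x w + Sb S x w := by
    rw [← Sb_add_right, hw, Sb_add_right]
  linarith

lemma measurable_fitz : Measurable (fitz S G) := by
  refine LowerSemicontinuous.measurable ?_
  refine lowerSemicontinuous_iSup fun x => lowerSemicontinuous_iSup fun _ => ?_
  exact (continuous_coe_real_ereal.comp (by fun_prop)).lowerSemicontinuous

variable {Sig P : Matrix (Fin d) (Fin d) ℝ}

lemma IsDecomp.maxSMono (h : IsDecomp S Sig P) (hS : S.IsHermitian) (hdet : IsUnit S.det) :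
    MaxSMono S {z | ∃ x : Fin d → ℝ, z = P.mulVec x} := by
  refine ⟨?_, fun H hH hsub => hsub.antisymm' fun y hy => ?_⟩
  · rintro _ ⟨x, rfl⟩ _ ⟨y, rfl⟩
    rw [← mulVec_sub]
    exact h.Sb_P_nonneg hS _
  · have h1 := hH y hy (P.mulVec y) (hsub ⟨y, rfl⟩)
    exact ⟨y, h.Q_eq_zero hS hdet (le_antisymm (h.Sb_Q_nonpos hS y) h1)⟩

lemma IsDecomp.fitz_eq (h : IsDecomp S Sig P) (hS : S.IsHermitian) (y : Fin d → ℝ) :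
    fitz S {z | ∃ x : Fin d → ℝ, z = P.mulVec x} y =
      ((Sb S (P.mulVec y) (P.mulVec y) / 2 : ℝ) : EReal) := by
  have key : ∀ x, Sb S (P.mulVec x) y = Sb S (P.mulVec x) (P.mulVec y) := fun x => by
    have := h.Sb_P_Q hS x y
    rw [Sb_sub_right] at this
    linarith
  refine le_antisymm (iSup₂_le ?_) ?_
  · rintro _ ⟨x, rfl⟩
    rw [EReal.coe_le_coe_iff, key]
    have h1 := h.Sb_P_nonneg hS (x - y)
    rw [mulVec_sub, Sb_sub_self hS] at h1
    linarith
  · refine le_trans (EReal.coe_le_coe_iff.2 (le_of_eq ?_))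
      (le_iSup₂ (f := fun x (_ : x ∈ {z | ∃ x : Fin d → ℝ, z = P.mulVec x}) =>
        ((Sb S x y - Sb S x x / 2 : ℝ) : EReal)) (P.mulVec y) ⟨y, rfl⟩)
    rw [key]
    ring

end Fitz

/-! ### The extended integral -/

section eInt

variable {α : Type*} [MeasurableSpace α] {μ : Measure α}

lemma eInt_coe {g : α → ℝ} (hg : Integrable g μ) :
    eInt μ (fun a => (g a : EReal)) = ((∫ a, g a ∂μ : ℝ) : EReal) := by
  have h1 : ∀ a, epos (g a : EReal) = ENNReal.ofReal (g a) := fun a => by simp [epos]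
  have h2 : ∀ a, epos (-(g a : EReal)) = ENNReal.ofReal (-g a) := fun a => by
    rw [← EReal.coe_neg]; simp [epos]
  have f1 : ∫⁻ a, ENNReal.ofReal (g a) ∂μ ≠ ⊤ := hg.lintegral_lt_top.ne
  have f2 : ∫⁻ a, ENNReal.ofReal (-g a) ∂μ ≠ ⊤ := hg.neg.lintegral_lt_top.ne
  rw [eInt]
  simp_rw [h1, h2]
  rw [integral_eq_lintegral_pos_part_sub_lintegral_neg_part hg, EReal.coe_sub,
    ← EReal.coe_ennreal_toReal f1, ← EReal.coe_ennreal_toReal f2]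

/-- An extended-valued function with an integrable minorant has either infinite integral or an
integrable real-valued version. -/
lemma eInt_dichotomy {f : α → EReal} (hf : Measurable f) {h : α → ℝ} (hh : Integrable h μ)
    (hle : ∀ a, (h a : EReal) ≤ f a) :
    eInt μ f = ⊤ ∨ ∃ g : α → ℝ, Measurable g ∧ Integrable g μ ∧ (∀ᵐ a ∂μ, f a = g a) ∧
      eInt μ f = ((∫ a, g a ∂μ : ℝ) : EReal) := by
  have hbot : ∀ a, f a ≠ ⊥ := fun a ha => by simpa [ha] using hle a
  have hneg : ∀ a, epos (-(f a)) ≤ ENNReal.ofReal (-h a) := by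
    intro a
    have h1 := hle a
    induction hfa : f a with
    | bot => exact absurd hfa (hbot a)
    | top => simp [epos]
    | coe r =>
      rw [hfa, EReal.coe_le_coe_iff] at h1
      rw [← EReal.coe_neg]
      simp only [epos, EReal.coe_ne_top, if_false, EReal.toReal_coe]
      exact ENNReal.ofReal_le_ofReal (by linarith)
  have hnegfin : ∫⁻ a, epos (-(f a)) ∂μ ≠ ⊤ :=
    ((lintegral_mono hneg).trans_lt hh.neg.lintegral_lt_top).ne
  have hm : Measurable epos := by
    unfold epos
    exact Measurable.ite (measurableSet_singleton _) measurable_const (by fun_prop)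
  by_cases hpos : ∫⁻ a, epos (f a) ∂μ = ⊤
  · left
    rw [eInt, hpos, ← EReal.coe_ennreal_toReal hnegfin]
    simp
  · right
    have hfin : ∀ᵐ a ∂μ, f a = ((f a).toReal : EReal) := by
      filter_upwards [ae_lt_top (hm.comp hf) hpos] with a ha
      rw [EReal.coe_toReal _ (hbot a)]
      intro hc
      simp [hc, epos] at ha
    have hgi : Integrable (fun a => (f a).toReal) μ := by
      refine ⟨hf.ereal_toReal.aestronglyMeasurable, ?_⟩
      have hb : ∀ᵐ a ∂μ, ‖(f a).toReal‖ₑ ≤ epos (f a) + epos (-(f a)) := by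
        filter_upwards [hfin] with a ha
        rw [ha, ← EReal.coe_neg]
        simp only [epos, EReal.coe_ne_top, if_false, EReal.toReal_coe]
        rw [← ofReal_norm, Real.norm_eq_abs]
        rcases le_total 0 (f a).toReal with hr | hr
        · rw [abs_of_nonneg hr]; exact le_self_add
        · rw [abs_of_nonpos hr]; exact le_add_self
      refine (lintegral_mono_ae hb).trans_lt ?_
      rw [lintegral_add_left (f := fun a => epos (f a)) (hm.comp hf)]
      exact ENNReal.add_lt_top.2 ⟨lt_top_iff_ne_top.2 hpos, lt_top_iff_ne_top.2 hnegfin⟩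
    refine ⟨fun a => (f a).toReal, hf.ereal_toReal, hgi, hfin, ?_⟩
    rw [← eInt_coe hgi, eInt, eInt]
    rw [lintegral_congr_ae (hfin.mono fun a ha => congrArg epos ha),
      lintegral_congr_ae (hfin.mono fun a ha => congrArg (fun t => epos (-t)) ha)]

end eInt

/-! ### Independence of the two components, and uniqueness of the decomposition -/

section Gauss

variable {d : ℕ} {Ω : Type*} [MeasurableSpace Ω] {ℙ : Measure Ω} [IsProbabilityMeasure ℙ]
  {Y : Ω → (Fin d → ℝ)} {S Sig P : Matrix (Fin d) (Fin d) ℝ}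

lemma IsDecomp.P_Sig_Q (h : IsDecomp S Sig P) (hSig : Sig.IsHermitian) :
    P * Sig * (1 - P)ᵀ = 0 := by
  have h1 : Sig * Pᵀ = P * Sig := by
    rw [← h.hermPSig.transpose_eq, Matrix.transpose_mul, hSig.transpose_eq]
  rw [transpose_sub, transpose_one, mul_sub, mul_one, mul_assoc, h1, ← mul_assoc, h.idem, sub_self]

lemma IsDecomp.Q_Sig_P (h : IsDecomp S Sig P) (hSig : Sig.IsHermitian) :
    (1 - P) * Sig * Pᵀ = 0 := by
  have := congrArg Matrix.transpose (h.P_Sig_Q hSig)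
  simpa only [Matrix.transpose_mul, transpose_transpose, hSig.transpose_eq, transpose_zero,
    ← mul_assoc] using this

lemma PosSemidef.dot_nonneg {C : Matrix (Fin d) (Fin d) ℝ} (hC : C.PosSemidef) (a : Fin d → ℝ) :
    0 ≤ a ⬝ᵥ C.mulVec a := by
  simpa using hC.dotProduct_mulVec_nonneg a

/-- The two components are uncorrelated, hence, being jointly Gaussian, independent. -/
lemma IsDecomp.indepFun (h : IsDecomp S Sig P) (hSig : Sig.PosDef)
    (hY : IsCenteredGaussian ℙ Y Sig) :
    ProbabilityTheory.IndepFun (fun ω => P.mulVec (Y ω)) (fun ω => (1 - P).mulVec (Y ω)) ℙ := by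
  have hX := hY.mulVec P
  have hZ := hY.mulVec (1 - P)
  rw [ProbabilityTheory.indepFun_iff_charFunDual_prod hX.aemeasurable hZ.aemeasurable]
  intro L
  obtain ⟨a, ha⟩ := strongDual_eq_dot (L.comp (.inl ℝ _ _))
  obtain ⟨b, hb⟩ := strongDual_eq_dot (L.comp (.inr ℝ _ _))
  rw [hX.charFunDual_map _ a ha, hZ.charFunDual_map _ b hb, charFunDual_eq_charFun_map_one,
    AEMeasurable.map_map_of_aemeasurable (by fun_prop)
      (hX.aemeasurable.prodMk hZ.aemeasurable)]
  set c := Pᵀ.mulVec a + (1 - P)ᵀ.mulVec b with hc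
  have hdot : ∀ (M : Matrix (Fin d) (Fin d) ℝ) (a x : Fin d → ℝ),
      a ⬝ᵥ M.mulVec x = Mᵀ.mulVec a ⬝ᵥ x := fun M a x => by
    rw [dotProduct_mulVec, ← vecMul_transpose, transpose_transpose]
  have hL : (L ∘ fun ω => (P.mulVec (Y ω), (1 - P).mulVec (Y ω))) = fun ω => c ⬝ᵥ Y ω := by
    ext ω
    have e : (P.mulVec (Y ω), (1 - P).mulVec (Y ω)) =
        (P.mulVec (Y ω), 0) + (0, (1 - P).mulVec (Y ω)) := by simp
    have ha' : L (P.mulVec (Y ω), 0) = a ⬝ᵥ P.mulVec (Y ω) := by rw [← ha]; rfl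
    have hb' : L (0, (1 - P).mulVec (Y ω)) = b ⬝ᵥ (1 - P).mulVec (Y ω) := by rw [← hb]; rfl
    rw [Function.comp_apply, e, map_add, ha', hb', hc, add_dotProduct, hdot, hdot]
  rw [hL, hY c, ProbabilityTheory.charFun_gaussianReal, ← Complex.exp_add]
  have hC : ∀ M : Matrix (Fin d) (Fin d) ℝ, (M * Sig * Mᵀ).PosSemidef := fun M => by
    simpa [conjTranspose_eq_transpose_of_trivial] using hSig.posSemidef.mul_mul_conjTranspose_same M
  rw [Real.coe_toNNReal _ (PosSemidef.dot_nonneg hSig.posSemidef _),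
    Real.coe_toNNReal _ (PosSemidef.dot_nonneg (hC _) _),
    Real.coe_toNNReal _ (PosSemidef.dot_nonneg (hC _) _)]
  have hvar : c ⬝ᵥ Sig.mulVec c = a ⬝ᵥ (P * Sig * Pᵀ).mulVec a +
      b ⬝ᵥ ((1 - P) * Sig * (1 - P)ᵀ).mulVec b := by
    have e1 : a ⬝ᵥ (P * Sig * (1 - P)ᵀ).mulVec b = 0 := by
      rw [h.P_Sig_Q hSig.1]; simp
    have e2 : b ⬝ᵥ ((1 - P) * Sig * Pᵀ).mulVec a = 0 := by
      rw [h.Q_Sig_P hSig.1]; simp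
    simp only [← mulVec_mulVec] at e1 e2 ⊢
    rw [hdot P] at e1
    rw [hdot (1 - P)] at e2
    rw [hdot P a, hdot (1 - P) b, hc]
    simp only [mulVec_add, dotProduct_add, add_dotProduct, e1, e2]
    ring
  rw [hvar]
  congr 1
  push_cast
  ring

omit [IsProbabilityMeasure ℙ] in
lemma IsCenteredGaussian.ae_eq_zero {W : Ω → (Fin d → ℝ)} (h : IsCenteredGaussian ℙ W 0) :
    ∀ᵐ ω ∂ℙ, W ω = 0 := by
  have h1 : ∀ i, ∀ᵐ ω ∂ℙ, W ω i = 0 := by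
    intro i
    have h2 := h.integral_dot_sq (Pi.single i 1)
    simp only [single_one_dotProduct, zero_mulVec, dotProduct_zero, Real.toNNReal_zero,
      NNReal.coe_zero] at h2
    rw [integral_eq_zero_iff_of_nonneg (fun ω => sq_nonneg _) (h.memLp_apply i).integrable_sq] at h2
    filter_upwards [h2] with ω hω
    simpa using hω
  filter_upwards [ae_all_iff.2 h1] with ω hω
  ext i
  exact hω i

/-- Two positive semidefinite summands of `Sig` that are `S`-orthogonal, with `S` nonnegative on
the range of the first and nonpositive on that of the second, come from a projection. -/
lemma exists_isDecomp {A C : Matrix (Fin d) (Fin d) ℝ} (hS : S.IsHermitian) (hdet : IsUnit S.det)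
    (hSig : Sig.PosDef) (hA : A.PosSemidef) (hC : C.PosSemidef) (hAC : A + C = Sig)
    (h1 : ∀ x, 0 ≤ Sb S (A.mulVec x) (A.mulVec x))
    (h2 : ∀ x, Sb S (C.mulVec x) (C.mulVec x) ≤ 0) (h3 : A * S * C = 0) :
    ∃ P', IsDecomp S Sig P' ∧ P' * A = A ∧ P' * C = 0 := by
  have hSigdet : IsUnit Sig.det := (Matrix.isUnit_iff_isUnit_det _).1 hSig.isUnit
  set D := Sig⁻¹ with hD
  have hDS : D * Sig = 1 := nonsing_inv_mul _ hSigdet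
  have hSD : Sig * D = 1 := mul_nonsing_inv _ hSigdet
  have hAt := hA.1.transpose_eq
  have hCt := hC.1.transpose_eq
  have hSt := hS.transpose_eq
  have hDt : Dᵀ = D := by rw [hD, transpose_nonsing_inv, hSig.1.transpose_eq]
  have h3' : C * S * A = 0 := by
    have := congrArg Matrix.transpose h3
    simpa only [Matrix.transpose_mul, hAt, hCt, hSt, transpose_zero, ← mul_assoc] using this
  have hCeq : C = Sig - A := by rw [← hAC]; abel
  have hK1 : A * D * C = A - A * D * A := by
    rw [hCeq, mul_sub, mul_assoc A D Sig, hDS, mul_one]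
  have hK2 : C * D * A = A - A * D * A := by
    rw [hCeq, sub_mul, sub_mul, hSD, one_mul]
  -- `K = A D C = C D A` satisfies `Sig * S * K = 0` by `S`-orthogonality of the two summands.
  have hK0 : Sig * (S * (A - A * D * A)) = 0 := by
    rw [← hAC, add_mul]
    nth_rewrite 1 [← hK2]
    rw [← hK1]
    simp only [← mul_assoc]
    rw [h3, h3']
    simp
  have hK : A - A * D * A = 0 := by
    have e : S⁻¹ * (D * (Sig * (S * (A - A * D * A)))) = A - A * D * A := by
      rw [← mul_assoc D, hDS, one_mul, ← mul_assoc, nonsing_inv_mul _ hdet, one_mul]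
    rw [← e, hK0, mul_zero, mul_zero]
  have hADA : A * D * A = A := (sub_eq_zero.1 hK).symm
  have hADC : A * D * C = 0 := hK1.trans hK
  have hSigSA : Sig * S * A = A * S * A := by
    rw [← hAC, add_mul, add_mul, h3', add_zero]
  have hSigSC : Sig * S * C = C * S * C := by
    rw [← hAC, add_mul, add_mul, h3, zero_add]
  have hSAD : S * (A * D) = (A * D)ᵀ * S * (A * D) := by
    rw [Matrix.transpose_mul, hAt, hDt]
    calc S * (A * D) = D * Sig * S * (A * D) := by rw [hDS, one_mul]
      _ = D * (Sig * S * A) * D := by simp only [mul_assoc]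
      _ = _ := by rw [hSigSA]; simp only [mul_assoc]
  have hSCD : S * (1 - A * D) = (C * D)ᵀ * S * (C * D) := by
    have : 1 - A * D = C * D := by rw [hCeq, sub_mul, hSD]
    rw [this, Matrix.transpose_mul, hCt, hDt]
    calc S * (C * D) = D * Sig * S * (C * D) := by rw [hDS, one_mul]
      _ = D * (Sig * S * C) * D := by simp only [mul_assoc]
      _ = _ := by rw [hSigSC]; simp only [mul_assoc]
  have hP1 : A * D * Sig = A := by rw [mul_assoc, hDS, mul_one]
  have hherm : ∀ M : Matrix (Fin d) (Fin d) ℝ, (Mᵀ * S * M).IsHermitian := fun M => by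
    rw [IsHermitian, conjTranspose_eq_transpose_of_trivial, Matrix.transpose_mul,
      Matrix.transpose_mul, hSt, transpose_transpose, mul_assoc]
  have hform : ∀ (M : Matrix (Fin d) (Fin d) ℝ) x,
      x ⬝ᵥ (Mᵀ * S * M).mulVec x = Sb S (M.mulVec x) (M.mulVec x) := fun M x => by
    rw [Sb_mulVec_right, Sb_mulVec_left, ← mul_assoc, Sb]
  refine ⟨A * D, ⟨?_, ?_, ?_, ?_, ?_, ?_, ?_⟩, hADA, hADC⟩
  · rw [← mul_assoc, hADA]
  · rw [hP1]; exact hA.1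
  · rw [hSAD]; exact hherm _
  · rw [hP1]; exact hA
  · rwa [sub_mul, one_mul, hP1, ← hCeq]
  · rw [hSAD]
    refine .of_dotProduct_mulVec_nonneg (hherm _) fun x => ?_
    rw [star_trivial, hform, ← mulVec_mulVec]
    exact h1 _
  · rw [hSCD]
    refine .of_dotProduct_mulVec_nonneg (hherm _).neg fun x => ?_
    rw [star_trivial, neg_mulVec, dotProduct_neg, hform, ← mulVec_mulVec]
    linarith [h2 (D.mulVec x)]

omit [IsProbabilityMeasure ℙ] in
/-- Second moments of a sum of independent centred Gaussian vectors. -/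
lemma momMat_add {X Z : Ω → (Fin d → ℝ)} {CX CZ : Matrix (Fin d) (Fin d) ℝ}
    (hX : IsCenteredGaussian ℙ X CX) (hZ : IsCenteredGaussian ℙ Z CZ)
    (hind : ProbabilityTheory.IndepFun X Z ℙ) (hsum : ∀ᵐ ω ∂ℙ, Y ω = X ω + Z ω) :
    momMat ℙ X + momMat ℙ Z = momMat ℙ Y := by
  have hcross : ∀ i j, ∫ ω, X ω i * Z ω j ∂ℙ = 0 := by
    intro i j
    have h1 : ProbabilityTheory.IndepFun (fun ω => X ω i) (fun ω => Z ω j) ℙ :=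
      hind.comp (φ := fun x : Fin d → ℝ => x i) (ψ := fun x : Fin d → ℝ => x j)
        (by fun_prop) (by fun_prop)
    have h2 := h1.integral_mul_eq_mul_integral (hX.memLp_apply i).1 (hZ.memLp_apply j).1
    rw [hX.integral_apply, zero_mul] at h2
    exact h2
  ext i j
  simp only [momMat, of_apply, Matrix.add_apply]
  have e : (fun ω => Y ω i * Y ω j) =ᵐ[ℙ] fun ω => X ω i * X ω j + Z ω i * Z ω j +
      (X ω i * Z ω j + X ω j * Z ω i) := by
    filter_upwards [hsum] with ω hω
    rw [hω]
    simp only [Pi.add_apply]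
    ring
  have hXX : Integrable (fun ω => X ω i * X ω j) ℙ :=
    (hX.memLp_apply i).integrable_mul (hX.memLp_apply j)
  have hZZ : Integrable (fun ω => Z ω i * Z ω j) ℙ :=
    (hZ.memLp_apply i).integrable_mul (hZ.memLp_apply j)
  have hXZ : Integrable (fun ω => X ω i * Z ω j) ℙ :=
    (hX.memLp_apply i).integrable_mul (hZ.memLp_apply j)
  have hXZ' : Integrable (fun ω => X ω j * Z ω i) ℙ :=
    (hX.memLp_apply j).integrable_mul (hZ.memLp_apply i)
  have hs : Integrable (fun ω => X ω i * X ω j + Z ω i * Z ω j) ℙ := hXX.add hZZ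
  have ht : Integrable (fun ω => X ω i * Z ω j + X ω j * Z ω i) ℙ := hXZ.add hXZ'
  rw [integral_congr_ae e, integral_add hs ht, integral_add hXX hZZ,
    integral_add hXZ hXZ', hcross, hcross]
  simp

/-- Any admissible independent pair is of the form `(P' Y, (1 - P') Y)`. Since standard Gaussian
laws charge every nonempty open set, the almost sure sign conditions hold on the full ranges of
the covariance matrices. -/
lemma exists_isDecomp_of_pair (hS : S.IsHermitian) (hdet : IsUnit S.det) (hSig : Sig.PosDef)
    (hY : IsCenteredGaussian ℙ Y Sig) {X Z : Ω → (Fin d → ℝ)} {CX CZ : Matrix (Fin d) (Fin d) ℝ}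
    (hX : IsCenteredGaussian ℙ X CX) (hZ : IsCenteredGaussian ℙ Z CZ)
    (hind : ProbabilityTheory.IndepFun X Z ℙ) (hsum : ∀ᵐ ω ∂ℙ, Y ω = X ω + Z ω)
    (hXX : ∀ᵐ ω ∂ℙ, 0 ≤ Sb S (X ω) (X ω)) (hZZ : ∀ᵐ ω ∂ℙ, Sb S (Z ω) (Z ω) ≤ 0)
    (hXZ : ∀ᵐ ω ∂ℙ, Sb S (X ω) (Z ω) = 0) :
    ∃ P', IsDecomp S Sig P' ∧ ∀ᵐ ω ∂ℙ, X ω = P'.mulVec (Y ω) := by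
  obtain ⟨B, hB, hBX⟩ := hX.momMat.exists_factor (momMat_posSemidef hX.memLp_apply)
  obtain ⟨B', hB', hBZ⟩ := hZ.momMat.exists_factor (momMat_posSemidef hZ.memLp_apply)
  have hclosed : IsClosed {p : (Fin d → ℝ) × (Fin d → ℝ) |
      0 ≤ Sb S p.1 p.1 ∧ Sb S p.2 p.2 ≤ 0 ∧ Sb S p.1 p.2 = 0} := by
    have h1 : IsClosed {p : (Fin d → ℝ) × (Fin d → ℝ) | 0 ≤ Sb S p.1 p.1} :=
      isClosed_le continuous_const (continuous_Sb S continuous_fst continuous_fst)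
    have h2 : IsClosed {p : (Fin d → ℝ) × (Fin d → ℝ) | Sb S p.2 p.2 ≤ 0} :=
      isClosed_le (continuous_Sb S continuous_snd continuous_snd) continuous_const
    have h3 : IsClosed {p : (Fin d → ℝ) × (Fin d → ℝ) | Sb S p.1 p.2 = 0} :=
      isClosed_eq (continuous_Sb S continuous_fst continuous_snd) continuous_const
    simpa only [ofPred_and] using h1.inter (h2.inter h3)
  have hlaw : ℙ.map (fun ω => (X ω, Z ω)) =
      ((stdG d).prod (stdG d)).map (Prod.map B.mulVec B'.mulVec) := by
    rw [hind.map_prod_eq_prod_map_map hX.aemeasurable hZ.aemeasurable, hBX, hBZ,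
      Measure.map_prod_map _ _ (by fun_prop) (by fun_prop)]
  have hae : ∀ᵐ p ∂(ℙ.map (fun ω => (X ω, Z ω))),
      0 ≤ Sb S p.1 p.1 ∧ Sb S p.2 p.2 ≤ 0 ∧ Sb S p.1 p.2 = 0 := by
    rw [ae_map_iff (hX.aemeasurable.prodMk hZ.aemeasurable) hclosed.measurableSet]
    filter_upwards [hXX, hZZ, hXZ] with ω h1 h2 h3 using ⟨h1, h2, h3⟩
  rw [hlaw, ae_map_iff (by fun_prop) hclosed.measurableSet] at hae
  have hdense := Measure.dense_of_ae hae
  have hcl : IsClosed ((Prod.map B.mulVec B'.mulVec) ⁻¹' {p : (Fin d → ℝ) × (Fin d → ℝ) |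
      0 ≤ Sb S p.1 p.1 ∧ Sb S p.2 p.2 ≤ 0 ∧ Sb S p.1 p.2 = 0}) :=
    hclosed.preimage (by fun_prop)
  have hall : ∀ u v, 0 ≤ Sb S (B.mulVec u) (B.mulVec u) ∧ Sb S (B'.mulVec v) (B'.mulVec v) ≤ 0 ∧
      Sb S (B.mulVec u) (B'.mulVec v) = 0 := by
    intro u v
    have : (u, v) ∈ ((Prod.map B.mulVec B'.mulVec) ⁻¹' {p : (Fin d → ℝ) × (Fin d → ℝ) |
        0 ≤ Sb S p.1 p.1 ∧ Sb S p.2 p.2 ≤ 0 ∧ Sb S p.1 p.2 = 0}) :=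
      hcl.closure_eq ▸ hdense (u, v)
    exact this
  have horth : Bᵀ * S * B' = 0 := by
    ext i j
    have := (hall (Pi.single i 1) (Pi.single j 1)).2.2
    rw [Sb_mulVec_right, Sb_mulVec_left, ← mul_assoc, Sb] at this
    simpa using this
  have hAC : momMat ℙ X + momMat ℙ Z = Sig := by
    rw [momMat_add hX hZ hind hsum, hY.momMat_eq hSig.posSemidef]
  obtain ⟨P', hP', hPA, hPC⟩ := exists_isDecomp hS hdet hSig (momMat_posSemidef hX.memLp_apply)
    (momMat_posSemidef hZ.memLp_apply) hAC
    (fun x => by rw [hB, ← mulVec_mulVec]; exact (hall _ 0).1)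
    (fun x => by rw [hB', ← mulVec_mulVec]; exact (hall 0 _).2.1)
    (by
      rw [hB, hB']
      calc B * Bᵀ * S * (B' * B'ᵀ) = B * (Bᵀ * S * B') * B'ᵀ := by simp only [mul_assoc]
        _ = 0 := by rw [horth]; simp)
  refine ⟨P', hP', ?_⟩
  have hQX := hX.momMat.mulVec (1 - P')
  rw [sub_mul, one_mul, hPA, sub_self, zero_mul] at hQX
  have hPZ := hZ.momMat.mulVec P'
  rw [hPC, zero_mul] at hPZ
  filter_upwards [hsum, hQX.ae_eq_zero, hPZ.ae_eq_zero] with ω h1 h2 h3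
  rw [h1, mulVec_add, h3, add_zero]
  rwa [sub_mulVec, one_mulVec, sub_eq_zero] at h2

/-- A nondegenerate Gaussian law charges every nonempty open set. -/
lemma isOpenPosMeasure_map (hSig : Sig.PosDef) (hY : IsCenteredGaussian ℙ Y Sig) :
    (ℙ.map Y).IsOpenPosMeasure := by
  obtain ⟨B, hB, hBY⟩ := hY.exists_factor hSig.posSemidef
  rw [hBY]
  refine Continuous.isOpenPosMeasure_map (by fun_prop) fun y => ⟨(Bᵀ * Sig⁻¹).mulVec y, ?_⟩
  rw [mulVec_mulVec, ← mul_assoc, ← hB,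
    mul_nonsing_inv _ ((Matrix.isUnit_iff_isUnit_det _).1 hSig.isUnit), one_mulVec]

end Gauss

/-! ### The primal problem -/

section Primal

variable {d : ℕ} {S Sig P : Matrix (Fin d) (Fin d) ℝ} {ν : Measure (Fin d → ℝ)}
  {γ : Measure ((Fin d → ℝ) × (Fin d → ℝ))}

lemma MGamma.memLp (h : MGamma ν γ) :
    (∀ i, MemLp (fun p => p.1 i) 2 γ) ∧ ∀ i, MemLp (fun p => p.2 i) 2 γ := by
  have h1 : MemLp (fun p => p.1) 2 γ := by
    rw [memLp_two_iff_integrable_sq_norm (by fun_prop)]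
    refine h.2.2.1.mono' (by fun_prop) (.of_forall fun p => ?_)
    rw [Real.norm_of_nonneg (by positivity)]
    linarith [sq_nonneg ‖p.2‖]
  have h2 : MemLp (fun p => p.2) 2 γ := by
    rw [memLp_two_iff_integrable_sq_norm (by fun_prop)]
    refine h.2.2.1.mono' (by fun_prop) (.of_forall fun p => ?_)
    rw [Real.norm_of_nonneg (by positivity)]
    linarith [sq_nonneg ‖p.1‖]
  exact ⟨h1.eval, h2.eval⟩

/-- The martingale property lets `y` be replaced by `x` when integrated against a function
of `x`. -/
lemma MGamma.integral_mul (h : MGamma ν γ) (i j : Fin d) :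
    ∫ p, p.1 i * p.2 j ∂γ = ∫ p, p.1 i * p.1 j ∂γ := by
  have := h.1
  obtain ⟨h1, h2⟩ := h.memLp
  have hm : MeasurableSpace.comap Prod.fst inferInstance ≤
      (inferInstance : MeasurableSpace ((Fin d → ℝ) × (Fin d → ℝ))) := measurable_fst.comap_le
  have hint2 : Integrable (fun p : (Fin d → ℝ) × (Fin d → ℝ) => p.2) γ :=
    (MemLp.of_eval h2).integrable (by norm_num)
  have e1 := ContinuousLinearMap.comp_condExp_comm (m := MeasurableSpace.comap Prod.fst inferInstance)
    hint2 (ContinuousLinearMap.proj (R := ℝ) (φ := fun _ : Fin d => ℝ) j)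
  have hsm : StronglyMeasurable[MeasurableSpace.comap Prod.fst inferInstance]
      (fun p : (Fin d → ℝ) × (Fin d → ℝ) => p.1 i) :=
    ((measurable_pi_apply i).comp (comap_measurable Prod.fst)).stronglyMeasurable
  have e2 := condExp_mul_of_stronglyMeasurable_left hsm ((h1 i).integrable_mul (h2 j))
    ((h2 j).integrable (by norm_num))
  have e3 := integral_condExp (μ := γ) hm
    (f := (fun p : (Fin d → ℝ) × (Fin d → ℝ) => p.1 i) * fun p => p.2 j)
  rw [integral_congr_ae e2] at e3
  refine Eq.trans e3.symm (integral_congr_ae ?_)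
  filter_upwards [e1, h.2.2.2] with p hp hq
  have : γ[fun p => p.2 j | MeasurableSpace.comap Prod.fst inferInstance] p = p.1 j := by
    rw [Function.comp_apply, hq] at hp
    exact hp.symm
  rw [Pi.mul_apply, this]

lemma MGamma.integral_Sb (h : MGamma ν γ) (M : Matrix (Fin d) (Fin d) ℝ) :
    ∫ p, Sb M p.1 p.2 ∂γ = ∫ p, Sb M p.1 p.1 ∂γ := by
  obtain ⟨h1, h2⟩ := h.memLp
  have i1 : ∀ i j, Integrable (fun p => M i j * (p.1 i * p.2 j)) γ := fun i j =>
    ((h1 i).integrable_mul (h2 j)).const_mul _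
  have i2 : ∀ i j, Integrable (fun p => M i j * (p.1 i * p.1 j)) γ := fun i j =>
    ((h1 i).integrable_mul (h1 j)).const_mul _
  simp_rw [Sb_eq_sum]
  rw [integral_finsetSum _ fun i _ => integrable_finsetSum _ fun j _ => i1 i j,
    integral_finsetSum _ fun i _ => integrable_finsetSum _ fun j _ => i2 i j]
  refine Finset.sum_congr rfl fun i _ => ?_
  rw [integral_finsetSum _ fun j _ => i1 i j, integral_finsetSum _ fun j _ => i2 i j]
  refine Finset.sum_congr rfl fun j _ => ?_
  rw [integral_const_mul, integral_const_mul, h.integral_mul]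

/-- Twice the duality gap `½ S(Py, Py) - ½ S(x, y)`, up to a term that integrates to zero under every
martingale plan; the correction makes the sign visible. -/
def gap (S P : Matrix (Fin d) (Fin d) ℝ) (p : (Fin d → ℝ) × (Fin d → ℝ)) : ℝ :=
  Sb S (P.mulVec (p.2 - p.1)) (P.mulVec (p.2 - p.1)) -
    Sb S (p.1 - P.mulVec p.1) (p.1 - P.mulVec p.1)

lemma IsDecomp.gap_nonneg (h : IsDecomp S Sig P) (hS : S.IsHermitian)
    (p : (Fin d → ℝ) × (Fin d → ℝ)) : 0 ≤ gap S P p := by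
  have h1 := h.Sb_P_nonneg hS (p.2 - p.1)
  have h2 := h.Sb_Q_nonpos hS p.1
  rw [gap]; linarith

lemma IsDecomp.eq_of_gap_eq_zero (h : IsDecomp S Sig P) (hS : S.IsHermitian)
    (hdet : IsUnit S.det) {p : (Fin d → ℝ) × (Fin d → ℝ)} (hp : gap S P p = 0) :
    p.1 = P.mulVec p.2 := by
  have h1 := h.Sb_P_nonneg hS (p.2 - p.1)
  have h2 := h.Sb_Q_nonpos hS p.1
  rw [gap] at hp
  have h3 := h.P_eq_zero hS hdet (x := p.2 - p.1) (by linarith)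
  have h4 := h.Q_eq_zero hS hdet (x := p.1) (by linarith)
  rw [mulVec_sub, sub_eq_zero] at h3
  rw [h3]; exact h4

/-- The primal value is the dual value `∫ S(Py, Py) / 2 dν` minus half of the mean gap. -/
lemma IsDecomp.primalVal_eq (h : IsDecomp S Sig P) (hS : S.IsHermitian) (hγ : MGamma ν γ) :
    Integrable (gap S P) γ ∧
      primalVal S γ = (1 / 2) * (∫ y, Sb (S * P) y y ∂ν - ∫ p, gap S P p ∂γ) := by
  obtain ⟨h1, h2⟩ := hγ.memLp
  have hgap : gap S P = fun p => Sb (S * P) p.2 p.2 - 2 * Sb (S * P) p.1 p.2 +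
      2 * Sb (S * P) p.1 p.1 - Sb S p.1 p.1 := by
    ext p
    have e1 := h.Sb_self_eq hS p.1
    have e2 := Sb_comm p.2 p.1 h.hermSP
    rw [h.Sb_P_P hS] at e1
    rw [gap, h.Sb_P_P hS, Sb_sub_left, Sb_sub_right, Sb_sub_right]
    linarith
  have iyy : Integrable (fun p => Sb (S * P) p.2 p.2) γ := integrable_Sb _ h2 h2
  have ixy : Integrable (fun p => 2 * Sb (S * P) p.1 p.2) γ :=
    (integrable_Sb _ h1 h2).const_mul 2
  have ixx : Integrable (fun p => 2 * Sb (S * P) p.1 p.1) γ :=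
    (integrable_Sb _ h1 h1).const_mul 2
  have is : Integrable (fun p => Sb S p.1 p.1) γ := integrable_Sb _ h1 h1
  have i1 : Integrable (fun p => Sb (S * P) p.2 p.2 - 2 * Sb (S * P) p.1 p.2) γ := iyy.sub ixy
  have i2 : Integrable (fun p => Sb (S * P) p.2 p.2 - 2 * Sb (S * P) p.1 p.2 +
      2 * Sb (S * P) p.1 p.1) γ := i1.add ixx
  rw [hgap]
  refine ⟨i2.sub is, ?_⟩
  have hν : ∫ y, Sb (S * P) y y ∂ν = ∫ p, Sb (S * P) p.2 p.2 ∂γ := by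
    have hc : Continuous fun y => Sb (S * P) y y := continuous_Sb _ continuous_id continuous_id
    rw [← hγ.2.1, integral_map (by fun_prop) hc.aestronglyMeasurable]
  rw [integral_sub i2 is, integral_add i1 ixx, integral_sub iyy ixy, integral_const_mul,
    integral_const_mul, hγ.integral_Sb, primalVal, hγ.integral_Sb, hν]
  ring

/-- A plan supported on the graph `x = Py` is determined by its second marginal. -/
lemma MGamma.eq_map (hγ : MGamma ν γ) (h : ∀ᵐ p ∂γ, p.1 = P.mulVec p.2) :
    γ = ν.map fun y => (P.mulVec y, y) := by
  rw [← hγ.2.1, Measure.map_map (by fun_prop) (by fun_prop)]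
  conv_lhs => rw [← Measure.map_id (μ := γ)]
  refine Measure.map_congr ?_
  filter_upwards [h] with p hp
  exact Prod.ext hp rfl

lemma primalVal_map (h : IsDecomp S Sig P) (hS : S.IsHermitian)
    (hγ : MGamma ν (ν.map fun y => (P.mulVec y, y))) :
    primalVal S (ν.map fun y => (P.mulVec y, y)) = (1 / 2) * ∫ y, Sb (S * P) y y ∂ν := by
  have h0 : ∫ p, gap S P p ∂(ν.map fun y => (P.mulVec y, y)) = 0 := by
    rw [integral_map (by fun_prop) (h.primalVal_eq hS hγ).1.1]
    refine integral_eq_zero_of_ae (.of_forall fun y => ?_)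
    simp [gap, mulVec_sub, h.mulVec_mulVec_self, Sb]
  rw [(h.primalVal_eq hS hγ).2, h0, sub_zero]

lemma IsDecomp.primalOpt (h : IsDecomp S Sig P) (hS : S.IsHermitian)
    (hγ : MGamma ν (ν.map fun y => (P.mulVec y, y))) :
    PrimalOpt S ν (ν.map fun y => (P.mulVec y, y)) := by
  refine ⟨hγ, fun γ' hγ' => ?_⟩
  rw [primalVal_map h hS hγ, (h.primalVal_eq hS hγ').2]
  have := integral_nonneg (μ := γ') (f := gap S P) fun p => h.gap_nonneg hS p
  linarith

lemma IsDecomp.primalOpt_unique (h : IsDecomp S Sig P) (hS : S.IsHermitian) (hdet : IsUnit S.det)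
    (hγ : MGamma ν (ν.map fun y => (P.mulVec y, y))) (hopt : PrimalOpt S ν γ) :
    γ = ν.map fun y => (P.mulVec y, y) := by
  refine hopt.1.eq_map ?_
  have h1 := hopt.2 _ hγ
  obtain ⟨hi, h2⟩ := h.primalVal_eq hS hopt.1
  rw [primalVal_map h hS hγ, h2] at h1
  have h3 := integral_nonneg (μ := γ) (f := gap S P) fun p => h.gap_nonneg hS p
  have h4 : ∫ p, gap S P p ∂γ = 0 := by linarith
  rw [integral_eq_zero_iff_of_nonneg (fun p => h.gap_nonneg hS p) hi] at h4
  filter_upwards [h4] with p hp using h.eq_of_gap_eq_zero hS hdet hp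

/-- The law of `(PY, Y)` is a martingale plan, since `Y - PY` is centred and independent
of `PY`. -/
lemma IsDecomp.mGamma {Ω : Type*} [MeasurableSpace Ω] {ℙ : Measure Ω} [IsProbabilityMeasure ℙ]
    {Y : Ω → (Fin d → ℝ)} (h : IsDecomp S Sig P) (hSig : Sig.PosDef) (hYm : Measurable Y)
    (hY : IsCenteredGaussian ℙ Y Sig) :
    MGamma (ℙ.map Y) (ℙ.map fun ω => (P.mulVec (Y ω), Y ω)) := by
  have hφ : Measurable fun ω => (P.mulVec (Y ω), Y ω) := by fun_prop
  have hprob := Measure.isProbabilityMeasure_map (μ := ℙ) hφ.aemeasurable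
  have hX := hY.mulVec P
  have hZ := hY.mulVec (1 - P)
  set γ := ℙ.map fun ω => (P.mulVec (Y ω), Y ω) with hγ
  have l1 : MemLp (fun p => p.1) 2 γ :=
    (memLp_map_measure_iff (by fun_prop) hφ.aemeasurable).2 (MemLp.of_eval hX.memLp_apply)
  have l2 : MemLp (fun p => p.2) 2 γ :=
    (memLp_map_measure_iff (by fun_prop) hφ.aemeasurable).2 (MemLp.of_eval hY.memLp_apply)
  have i1 : Integrable (fun p => p.1) γ := l1.integrable (by norm_num)
  have i2 : Integrable (fun p => p.2) γ := l2.integrable (by norm_num)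
  refine ⟨hprob, ?_, ?_, ?_⟩
  · rw [hγ, Measure.map_map (by fun_prop) hφ]; rfl
  · exact ((memLp_two_iff_integrable_sq_norm l1.1).1 l1).add
      ((memLp_two_iff_integrable_sq_norm l2.1).1 l2)
  · have hind : ProbabilityTheory.IndepFun (fun p : (Fin d → ℝ) × (Fin d → ℝ) => p.2 - p.1)
        Prod.fst γ := by
      rw [ProbabilityTheory.indepFun_iff_measure_inter_preimage_eq_mul]
      intro s t hs ht
      have hs' : MeasurableSet ((fun p : (Fin d → ℝ) × (Fin d → ℝ) => p.2 - p.1) ⁻¹' s) :=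
        (measurable_snd.sub measurable_fst) hs
      have ht' : MeasurableSet ((Prod.fst : (Fin d → ℝ) × (Fin d → ℝ) → _) ⁻¹' t) :=
        measurable_fst ht
      have := ProbabilityTheory.indepFun_iff_measure_inter_preimage_eq_mul.1
        (h.indepFun hSig hY).symm s t hs ht
      rw [hγ, Measure.map_apply hφ (hs'.inter ht'), Measure.map_apply hφ hs',
        Measure.map_apply hφ ht']
      simp only [one_sub_mulVec] at this
      exact this
    have hsub : Measurable fun p : (Fin d → ℝ) × (Fin d → ℝ) => p.2 - p.1 :=
      measurable_snd.sub measurable_fst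
    have e0 := condExp_indep_eq hsub.comap_le measurable_fst.comap_le
      (comap_measurable (fun p : (Fin d → ℝ) × (Fin d → ℝ) => p.2 - p.1)).stronglyMeasurable hind
    have hmean : ∫ p, (p.2 - p.1) ∂γ = 0 := by
      rw [hγ, integral_map hφ.aemeasurable (by fun_prop)]
      have hz : ∀ i, Integrable (fun ω => (Y ω - P.mulVec (Y ω)) i) ℙ := fun i => by
        simpa only [one_sub_mulVec] using (hZ.memLp_apply i).integrable (by norm_num)
      ext i
      rw [eval_integral hz]
      simpa only [one_sub_mulVec, Pi.zero_apply] using hZ.integral_apply i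
    have e1 := condExp_add i1 (i2.sub i1) (MeasurableSpace.comap Prod.fst inferInstance)
    have e2 := condExp_of_stronglyMeasurable (μ := γ) measurable_fst.comap_le
      (comap_measurable (Prod.fst : (Fin d → ℝ) × (Fin d → ℝ) → _)).stronglyMeasurable i1
    have e3 : (fun p : (Fin d → ℝ) × (Fin d → ℝ) => p.2) =
        (fun p => p.1) + ((fun p => p.2) - fun p => p.1) := by
      ext p; simp
    rw [MartProp, e3]
    filter_upwards [e0, e1] with p hp hq
    rw [hq, Pi.add_apply]
    have e4 : γ[(fun p : (Fin d → ℝ) × (Fin d → ℝ) => p.2) - (fun p => p.1) |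
        MeasurableSpace.comap Prod.fst inferInstance] p = 0 := hp.trans hmean
    rw [e4, add_zero]
    exact congrFun e2 p

end Primal

/-! ### The dual problem -/

section Dual

variable {d : ℕ} {Ω : Type*} [MeasurableSpace Ω] {ℙ : Measure Ω} [IsProbabilityMeasure ℙ]
  {Y : Ω → (Fin d → ℝ)} {S Sig P : Matrix (Fin d) (Fin d) ℝ}

/-- The reflection `y ↦ Py - (y - Py)` preserves the Gaussian law. -/
lemma IsDecomp.measurePreserving (h : IsDecomp S Sig P) (hSig : Sig.PosDef) (hYm : Measurable Y)
    (hY : IsCenteredGaussian ℙ Y Sig) :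
    MeasurePreserving (P - (1 - P)).mulVec (ℙ.map Y) (ℙ.map Y) := by
  refine ⟨by fun_prop, ?_⟩
  have hR : (P - (1 - P)) * Sig * (P - (1 - P))ᵀ = Sig := by
    have h1 := h.P_Sig_Q hSig.1
    have h2 := h.Q_Sig_P hSig.1
    have h3 : (P - (1 - P)) * Sig * (P - (1 - P))ᵀ = (P + (1 - P)) * Sig * (P + (1 - P))ᵀ := by
      rw [transpose_sub, transpose_add]
      generalize 1 - P = Q at *
      simp only [sub_mul, mul_sub, add_mul, mul_add, h1, h2]
      abel
    rw [h3, add_sub_cancel, one_mul, transpose_one, mul_one]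
  have h1 := hY.mulVec (P - (1 - P))
  rw [hR] at h1
  rw [Measure.map_map (by fun_prop) hYm]
  exact h1.map_eq hY

/-- `∫ S(Py, Py) / 2 dν` is the dual value, attained only by the range of `P`: averaging the convex
function `ψ_H` over the reflection bounds it below by its value at `Py`, where it is at least
`S(Py, Py) / 2`. -/
lemma IsDecomp.le_eInt (h : IsDecomp S Sig P) (hS : S.IsHermitian) (hdet : IsUnit S.det)
    (hSig : Sig.PosDef) (hYm : Measurable Y) (hY : IsCenteredGaussian ℙ Y Sig)
    {H : Set (Fin d → ℝ)} (hH : MaxSMono S H) :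
    ((∫ y, Sb S (P.mulVec y) (P.mulVec y) / 2 ∂(ℙ.map Y) : ℝ) : EReal) ≤
        eInt (ℙ.map Y) (fitz S H) ∧
      (eInt (ℙ.map Y) (fitz S H) ≤
          ((∫ y, Sb S (P.mulVec y) (P.mulVec y) / 2 ∂(ℙ.map Y) : ℝ) : EReal) →
        H = {z | ∃ x : Fin d → ℝ, z = P.mulVec x}) := by
  have hmp := h.measurePreserving hSig hYm hY
  have hpos := isOpenPosMeasure_map hSig hY
  have hL : ∀ i, MemLp (fun y : Fin d → ℝ => y i) 2 (ℙ.map Y) := fun i =>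
    (memLp_map_measure_iff (measurable_pi_apply i).aestronglyMeasurable hYm.aemeasurable).2 (hY.memLp_apply i)
  have hLP : ∀ i, MemLp (fun y : Fin d → ℝ => P.mulVec y i) 2 (ℙ.map Y) := fun i =>
    (memLp_map_measure_iff (by fun_prop) hYm.aemeasurable).2 ((hY.mulVec P).memLp_apply i)
  set ν := ℙ.map Y
  have hq : Integrable (fun y => Sb S (P.mulVec y) (P.mulVec y) / 2) ν :=
    (integrable_Sb S hLP hLP).div_const 2
  rcases eInt_dichotomy measurable_fitz ((integrable_Sb S hL hL).div_const 2)
    (hH.le_fitz hS) with htop | ⟨g, hgm, hg, hfg, hval⟩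
  · rw [htop]
    exact ⟨le_top, fun hc => absurd (top_le_iff.1 hc) (EReal.coe_ne_top _)⟩
  · have hgR : Integrable (fun y => g ((P - (1 - P)).mulVec y)) ν :=
      hmp.integrable_comp_of_integrable hg
    have hgReq : ∫ y, g ((P - (1 - P)).mulVec y) ∂ν = ∫ y, g y ∂ν := by
      conv_rhs => rw [← hmp.map_eq]
      rw [integral_map hmp.measurable.aemeasurable hgm.aestronglyMeasurable]
    have hmid : ∀ᵐ y ∂ν, fitz S H (P.mulVec y) ≤
        (((g y + g ((P - (1 - P)).mulVec y)) / 2 : ℝ) : EReal) := by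
      filter_upwards [hfg, hmp.quasiMeasurePreserving.ae hfg] with y h1 h2
      refine fitz_midpoint ?_ h1 h2
      rw [sub_mulVec, one_sub_mulVec]
      abel
    have hlow : ∀ᵐ y ∂ν, Sb S (P.mulVec y) (P.mulVec y) / 2 ≤
        (g y + g ((P - (1 - P)).mulVec y)) / 2 := by
      filter_upwards [hmid] with y hy
      exact EReal.coe_le_coe_iff.1 ((hH.le_fitz hS _).trans hy)
    have hi : Integrable (fun y => (g y + g ((P - (1 - P)).mulVec y)) / 2) ν :=
      (hg.add hgR).div_const 2
    have hint : ∫ y, (g y + g ((P - (1 - P)).mulVec y)) / 2 ∂ν = ∫ y, g y ∂ν := by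
      rw [integral_div, integral_add hg hgR, hgReq]
      ring
    have hle := integral_mono_ae hq hi hlow
    rw [hint] at hle
    rw [hval]
    refine ⟨EReal.coe_le_coe_iff.2 hle, fun hc => ?_⟩
    have heq : ∫ y, Sb S (P.mulVec y) (P.mulVec y) / 2 ∂ν =
        ∫ y, (g y + g ((P - (1 - P)).mulVec y)) / 2 ∂ν := by
      rw [hint]
      exact le_antisymm hle (EReal.coe_le_coe_iff.1 hc)
    have hae := (integral_eq_iff_of_ae_le hq hi hlow).1 heq
    have hmem : ∀ᵐ y ∂ν, P.mulVec y ∈ H := by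
      filter_upwards [hmid, hae] with y h1 h2
      refine hH.mem_of_fitz_le hS ?_
      rw [h2]
      exact h1
    -- `H` is closed and `ν` charges every open set, so `Py ∈ H` for every `y`.
    have hall : ∀ y, P.mulVec y ∈ H := by
      have hcl : IsClosed (P.mulVec ⁻¹' H) := hH.isClosed.preimage (by fun_prop)
      intro y
      have : y ∈ P.mulVec ⁻¹' H := hcl.closure_eq ▸ Measure.dense_of_ae hmem y
      exact this
    refine (h.maxSMono hS hdet).2 H hH.1 ?_
    rintro _ ⟨x, rfl⟩
    exact hall x

omit [IsProbabilityMeasure ℙ] in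
lemma IsDecomp.eInt_range (h : IsDecomp S Sig P) (hS : S.IsHermitian) (hYm : Measurable Y)
    (hY : IsCenteredGaussian ℙ Y Sig) :
    eInt (ℙ.map Y) (fitz S {z | ∃ x : Fin d → ℝ, z = P.mulVec x}) =
      ((∫ y, Sb S (P.mulVec y) (P.mulVec y) / 2 ∂(ℙ.map Y) : ℝ) : EReal) := by
  have hLP : ∀ i, MemLp (fun y : Fin d → ℝ => P.mulVec y i) 2 (ℙ.map Y) := fun i =>
    (memLp_map_measure_iff (by fun_prop) hYm.aemeasurable).2 ((hY.mulVec P).memLp_apply i)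
  rw [← eInt_coe ((integrable_Sb S hLP hLP).div_const 2)]
  congr 1
  exact funext fun y => h.fitz_eq hS y

end Dual

/-- `PY` depends only on the law of `(PY, Y)`. -/
lemma ae_eq_of_map_eq {d : ℕ} {Ω : Type*} [MeasurableSpace Ω] {ℙ : Measure Ω}
    {Y : Ω → (Fin d → ℝ)} (hYm : Measurable Y) {P P' : Matrix (Fin d) (Fin d) ℝ}
    (h : (ℙ.map fun ω => (P'.mulVec (Y ω), Y ω)) = ℙ.map fun ω => (P.mulVec (Y ω), Y ω)) :
    ∀ᵐ ω ∂ℙ, P'.mulVec (Y ω) = P.mulVec (Y ω) := by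
  have hcl : IsClosed {p : (Fin d → ℝ) × (Fin d → ℝ) | p.1 = P.mulVec p.2} :=
    isClosed_eq (by fun_prop) (by fun_prop)
  have h1 : ∀ᵐ p ∂(ℙ.map fun ω => (P.mulVec (Y ω), Y ω)), p.1 = P.mulVec p.2 := by
    rw [ae_map_iff (by fun_prop) hcl.measurableSet]
    exact .of_forall fun ω => rfl
  rw [← h, ae_map_iff (by fun_prop) hcl.measurableSet] at h1
  exact h1

/-- Theorem 10: for a centered Gaussian `Y` with positive definite
covariance `Σ`, and `P` the unique idempotent matrix of Theorem 7, `X := PY` and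
`Z := (I-P)Y` are the unique pair of independent centered Gaussian random variables with
`Y = X + Z`, `S(X,X) ≥ 0`, `S(Z,Z) ≤ 0`, `S(X,Z) = 0`; the law of `(X,Y)` is the unique
optimal primal plan and `range P` is the unique optimal dual set. -/
theorem gaussian_decomposition
    (d m : ℕ) (S : Matrix (Fin d) (Fin d) ℝ) (hS : S.IsHermitian)
    (hrank : IsUnit S.det)
    (hm : Nat.card {i : Fin d // 0 < hS.eigenvalues i} = m)
    {Ω : Type*} [MeasurableSpace Ω] (ℙ : Measure Ω) [IsProbabilityMeasure ℙ]
    (Y : Ω → (Fin d → ℝ)) (hYmeas : Measurable Y)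
    (Sig : Matrix (Fin d) (Fin d) ℝ) (hSigPD : Sig.PosDef)
    (hY : IsCenteredGaussian ℙ Y Sig)
    (P : Matrix (Fin d) (Fin d) ℝ) (hP : P * P = P)
    (hPSig : (P * Sig).IsHermitian) (hSP : (S * P).IsHermitian)
    (hPSigPos : (P * Sig).PosSemidef) (hIPSigPos : ((1 - P) * Sig).PosSemidef)
    (hSPpos : (S * P).PosSemidef) (hSIPneg : (-(S * (1 - P))).PosSemidef) :
    ((∃ CX, IsCenteredGaussian ℙ (fun ω => P.mulVec (Y ω)) CX) ∧
     (∃ CZ, IsCenteredGaussian ℙ (fun ω => (1 - P).mulVec (Y ω)) CZ) ∧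
     ProbabilityTheory.IndepFun (fun ω => P.mulVec (Y ω))
       (fun ω => (1 - P).mulVec (Y ω)) ℙ ∧
     (∀ ω, Y ω = P.mulVec (Y ω) + (1 - P).mulVec (Y ω)) ∧
     (∀ᵐ ω ∂ℙ, 0 ≤ Sb S (P.mulVec (Y ω)) (P.mulVec (Y ω))) ∧
     (∀ᵐ ω ∂ℙ, Sb S ((1 - P).mulVec (Y ω)) ((1 - P).mulVec (Y ω)) ≤ 0) ∧
     (∀ᵐ ω ∂ℙ, Sb S (P.mulVec (Y ω)) ((1 - P).mulVec (Y ω)) = 0)) ∧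
    (∀ X' Z' : Ω → (Fin d → ℝ),
      (∃ CX, IsCenteredGaussian ℙ X' CX) → (∃ CZ, IsCenteredGaussian ℙ Z' CZ) →
      ProbabilityTheory.IndepFun X' Z' ℙ →
      (∀ᵐ ω ∂ℙ, Y ω = X' ω + Z' ω) →
      (∀ᵐ ω ∂ℙ, 0 ≤ Sb S (X' ω) (X' ω)) →
      (∀ᵐ ω ∂ℙ, Sb S (Z' ω) (Z' ω) ≤ 0) →
      (∀ᵐ ω ∂ℙ, Sb S (X' ω) (Z' ω) = 0) →
      (∀ᵐ ω ∂ℙ, X' ω = P.mulVec (Y ω) ∧ Z' ω = (1 - P).mulVec (Y ω))) ∧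
    PrimalOpt S (ℙ.map Y) (ℙ.map fun ω => (P.mulVec (Y ω), Y ω)) ∧
    (∀ γ, PrimalOpt S (ℙ.map Y) γ → γ = ℙ.map fun ω => (P.mulVec (Y ω), Y ω)) ∧
    DualOpt S (ℙ.map Y) {z | ∃ x : Fin d → ℝ, z = P.mulVec x} ∧
    (∀ G, DualOpt S (ℙ.map Y) G → G = {z | ∃ x : Fin d → ℝ, z = P.mulVec x}) := by
  have h : IsDecomp S Sig P := ⟨hP, hPSig, hSP, hPSigPos, hIPSigPos, hSPpos, hSIPneg⟩
  -- Plans of the form `law(MY, Y)` as images of `law(Y)`, the form used for the primal problem.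
  have hmap : ∀ M : Matrix (Fin d) (Fin d) ℝ, (ℙ.map fun ω => (M.mulVec (Y ω), Y ω)) =
      (ℙ.map Y).map fun y => (M.mulVec y, y) := fun M => by
    rw [Measure.map_map (by fun_prop) hYmeas]; rfl
  have hΓ : ∀ M, IsDecomp S Sig M →
      MGamma (ℙ.map Y) ((ℙ.map Y).map fun y => (M.mulVec y, y)) := fun M hM => by
    rw [← hmap]; exact hM.mGamma hSigPD hYmeas hY
  refine ⟨⟨⟨_, hY.mulVec P⟩, ⟨_, hY.mulVec (1 - P)⟩, h.indepFun hSigPD hY, fun ω => ?_,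
    .of_forall fun ω => h.Sb_P_nonneg hS _, .of_forall fun ω => ?_, .of_forall fun ω => ?_⟩,
    ?_, ?_, ?_, ⟨h.maxSMono hS hrank, fun H hH => ?_⟩, fun G hG => ?_⟩
  · rw [IsDecomp.one_sub_mulVec]; abel
  · rw [IsDecomp.one_sub_mulVec]; exact h.Sb_Q_nonpos hS _
  · rw [IsDecomp.one_sub_mulVec]; exact h.Sb_P_Q hS _ _
  · rintro X' Z' ⟨CX, hX⟩ ⟨CZ, hZ⟩ hind hsum hXX hZZ hXZ
    obtain ⟨P', hP', hX'⟩ := exists_isDecomp_of_pair hS hrank hSigPD hY hX hZ hind hsum hXX hZZ hXZ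
    have hlaw := h.primalOpt_unique hS hrank (hΓ P h) (hP'.primalOpt hS (hΓ P' hP'))
    rw [← hmap, ← hmap] at hlaw
    filter_upwards [hsum, hX', ae_eq_of_map_eq hYmeas hlaw] with ω h1 h2 h3
    refine ⟨h2.trans h3, ?_⟩
    rw [IsDecomp.one_sub_mulVec, ← h3, ← h2, h1]
    abel
  · rw [hmap]; exact h.primalOpt hS (hΓ P h)
  · intro γ hγ
    rw [hmap]; exact h.primalOpt_unique hS hrank (hΓ P h) hγ
  · rw [h.eInt_range hS hYmeas hY]
    exact (h.le_eInt hS hrank hSigPD hYmeas hY hH).1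
  · refine (h.le_eInt hS hrank hSigPD hYmeas hY hG.1).2 ?_
    rw [← h.eInt_range hS hYmeas hY]
    exact hG.2 _ (h.maxSMono hS hrank)


end
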